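/- arXiv:2201.06380 — 4 statements merged into one kernel-verified Lean document; each statement's English description precedes it below -/
import Mathlib

section
/- Let B be an m×n matrix over F₂ and let k be the maximum, taken over all rows and all columns of B, of the number of nonzero entries in that row or column. Then B can be written as a sum B = P₁ + ⋯ + P_k of exactly k partial permutation matrices whose supports are pairwise disjoint; moreover, B cannot be written as a sum of fewer than k partial permutation matrices with pairwise disjoint supports. -/
/-- A partial permutation matrix over `F₂`: at most one nonzero entry in each
row and in each column. -/
def IsPartialPermMatrix {m n : ℕ} (P : Matrix (Fin m) (Fin n) (ZMod 2)) : Prop :=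
  (∀ i, (Finset.univ.filter fun j => P i j ≠ 0).card ≤ 1) ∧
  (∀ j, (Finset.univ.filter fun i => P i j ≠ 0).card ≤ 1)

/-- Two matrices have disjoint supports if they are never both nonzero at the
same entry. -/
def DisjointSupports {m n : ℕ} (P Q : Matrix (Fin m) (Fin n) (ZMod 2)) : Prop :=
  ∀ i j, P i j = 0 ∨ Q i j = 0

theorem birkhoff_nat {α : Type*} [Fintype α] [DecidableEq α] (k : ℕ) :
    ∀ M : α → α → ℕ, (∀ a, ∑ b, M a b = k) → (∀ b, ∑ a, M a b = k) →
      ∃ f : Fin k → α → α, (∀ t, Function.Injective (f t)) ∧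
        ∀ a b, M a b = ∑ t, if f t a = b then 1 else 0 := by
  induction k with
  | zero =>
    intro M hr hc
    refine ⟨fun t => t.elim0, fun t => t.elim0, fun a b => ?_⟩
    have := hr a
    rw [Finset.sum_eq_zero_iff] at this
    simpa using this b (Finset.mem_univ b)
  | succ k ih =>
    intro M hr hc
    have hall : ∃ g : α → α, Function.Injective g ∧
        ∀ a, g a ∈ Finset.univ.filter (fun b => M a b ≠ 0) := by
      rw [← Finset.all_card_le_biUnion_card_iff_exists_injective]
      intro A
      set N := A.biUnion fun a => Finset.univ.filter (fun b => M a b ≠ 0) with hN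
      have h1 : A.card * (k + 1) = ∑ a ∈ A, ∑ b ∈ N, M a b := by
        rw [← smul_eq_mul, ← Finset.sum_const]
        refine Finset.sum_congr rfl fun a ha => ?_
        rw [← hr a]
        symm
        refine Finset.sum_subset (Finset.subset_univ _) fun b _ hb => ?_
        by_contra h
        exact hb (Finset.mem_biUnion.2 ⟨a, ha, by simpa using h⟩)
      have h2 : ∑ a ∈ A, ∑ b ∈ N, M a b ≤ N.card * (k + 1) := by
        rw [Finset.sum_comm, ← smul_eq_mul, ← Finset.sum_const]
        refine Finset.sum_le_sum fun b _ => ?_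
        rw [← hc b]
        exact Finset.sum_le_sum_of_subset (Finset.subset_univ _)
      exact Nat.le_of_mul_le_mul_right (h1 ▸ h2) (Nat.succ_pos k)
    obtain ⟨g, hg, hgM⟩ := hall
    have hgM' : ∀ a, M a (g a) ≠ 0 := fun a => by simpa using hgM a
    have hle : ∀ a b, (if g a = b then 1 else 0) ≤ M a b := by
      intro a b
      split_ifs with h
      · subst h; exact Nat.one_le_iff_ne_zero.2 (hgM' a)
      · exact Nat.zero_le _
    obtain ⟨f, hf, hfM⟩ := ih (fun a b => M a b - if g a = b then 1 else 0)
      (fun a => by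
        rw [Finset.sum_tsub_distrib _ (fun b _ => hle a b), hr a]; simp)
      (fun b => by
        rw [Finset.sum_tsub_distrib _ (fun a _ => hle a b), hc b]
        obtain ⟨a, rfl⟩ := (Finite.injective_iff_surjective.1 hg) b
        simp [hg.eq_iff])
    refine ⟨Fin.cons g f, fun t => ?_, fun a b => ?_⟩
    · refine Fin.cases ?_ (fun t => ?_) t
      · simpa using hg
      · simpa using hf t
    · rw [Fin.sum_univ_succ]
      simp only [Fin.cons_zero, Fin.cons_succ]
      rw [← hfM a b]
      have := hle a b
      omega

theorem card_le_of_sum {ι : Type*} [Fintype ι] {l : ℕ} (v : ι → ZMod 2)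
    (p : Fin l → ι → ZMod 2) (hp : ∀ t, (Finset.univ.filter fun j => p t j ≠ 0).card ≤ 1)
    (h : ∀ j, v j = ∑ t, p t j) : (Finset.univ.filter fun j => v j ≠ 0).card ≤ l := by
  classical
  have hsub : (Finset.univ.filter fun j => v j ≠ 0) ⊆
      Finset.univ.biUnion fun t => Finset.univ.filter fun j => p t j ≠ 0 := by
    intro j hj
    simp only [Finset.mem_filter, Finset.mem_univ, true_and, h] at hj
    obtain ⟨t, -, ht⟩ := Finset.exists_ne_zero_of_sum_ne_zero hj
    simpa using ⟨t, ht⟩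
  refine (Finset.card_le_card hsub).trans (Finset.card_biUnion_le.trans ?_)
  exact (Finset.sum_le_sum fun t _ => hp t).trans (by simp)

theorem stmt0 {m n : ℕ} (B : Matrix (Fin m) (Fin n) (ZMod 2)) (k : ℕ)
    (hk : k =
      max
        (Finset.univ.sup fun i => (Finset.univ.filter fun j => B i j ≠ 0).card)
        (Finset.univ.sup fun j => (Finset.univ.filter fun i => B i j ≠ 0).card)) :
    (∃ P : Fin k → Matrix (Fin m) (Fin n) (ZMod 2),
      (∀ t, IsPartialPermMatrix (P t)) ∧
      (∀ t s, t ≠ s → DisjointSupports (P t) (P s)) ∧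
      B = ∑ t, P t) ∧
    (∀ l : ℕ,
      (∃ P : Fin l → Matrix (Fin m) (Fin n) (ZMod 2),
        (∀ t, IsPartialPermMatrix (P t)) ∧
        (∀ t s, t ≠ s → DisjointSupports (P t) (P s)) ∧
        B = ∑ t, P t) → k ≤ l) := by
  constructor
  · have hr : ∀ i, (Finset.univ.filter fun j => B i j ≠ 0).card ≤ k := fun i => by
      rw [hk]
      exact le_max_of_le_left
        (Finset.le_sup (f := fun i => (Finset.univ.filter fun j => B i j ≠ 0).card)
          (Finset.mem_univ i))
    have hc : ∀ j, (Finset.univ.filter fun i => B i j ≠ 0).card ≤ k := fun j => by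
      rw [hk]
      exact le_max_of_le_right
        (Finset.le_sup (f := fun j => (Finset.univ.filter fun i => B i j ≠ 0).card)
          (Finset.mem_univ j))
    clear hk
    let M : Fin m ⊕ Fin n → Fin m ⊕ Fin n → ℕ := fun a b =>
      match a, b with
      | .inl i, .inr j => if B i j ≠ 0 then 1 else 0
      | .inl i, .inl i' => if i = i' then k - (Finset.univ.filter fun j => B i j ≠ 0).card else 0
      | .inr j, .inr j' => if j = j' then k - (Finset.univ.filter fun i => B i j ≠ 0).card else 0
      | .inr j, .inl i => if B i j ≠ 0 then 1 else 0
    obtain ⟨f, hf, hfM⟩ := birkhoff_nat k M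
      (by
        rintro (i | j)
        · have := hr i
          simp only [M, Fintype.sum_sum_type, Finset.sum_ite_eq, Finset.mem_univ, if_true,
            ← Finset.card_filter]
          omega
        · have := hc j
          simp only [M, Fintype.sum_sum_type, Finset.sum_ite_eq, Finset.mem_univ, if_true,
            ← Finset.card_filter]
          omega)
      (by
        rintro (i | j)
        · have := hr i
          simp only [M, Fintype.sum_sum_type, Finset.sum_ite_eq', Finset.mem_univ, if_true,
            ← Finset.card_filter]
          omega
        · have := hc j
          simp only [M, Fintype.sum_sum_type, Finset.sum_ite_eq', Finset.mem_univ, if_true,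
            ← Finset.card_filter]
          omega)
    have key : ∀ i j, (if B i j ≠ 0 then 1 else 0) =
        ∑ t, if f t (.inl i) = .inr j then 1 else 0 := fun i j => hfM (.inl i) (.inr j)
    refine ⟨fun t => Matrix.of fun i j => if f t (.inl i) = .inr j then 1 else 0, ?_, ?_, ?_⟩
    · intro t
      constructor
      · intro i
        rw [Finset.card_le_one]
        intro a ha b hb
        simp at ha hb
        exact Sum.inr_injective (ha.symm.trans hb)
      · intro j
        rw [Finset.card_le_one]
        intro a ha b hb
        simp at ha hb
        exact Sum.inl_injective (hf t (ha.trans hb.symm))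
    · intro t s hts i j
      by_contra hcon
      simp at hcon
      have h1 : ∑ t, (if f t (.inl i) = .inr j then 1 else 0) ≤ 1 := by
        rw [← key i j]; split_ifs <;> simp
      rw [← Finset.card_filter, Finset.card_le_one] at h1
      exact hts (h1 t (by simpa using hcon.1) s (by simpa using hcon.2))
    · ext i j
      have h := congrArg (Nat.cast : ℕ → ZMod 2) (key i j)
      rw [Matrix.sum_apply]
      simp only [Matrix.of_apply]
      push_cast at h
      rw [← h]
      generalize B i j = x
      revert x
      decide
  · rintro l ⟨P, hP, -, hB⟩
    rw [hk]
    refine max_le (Finset.sup_le fun i _ => ?_) (Finset.sup_le fun j _ => ?_)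
    · exact card_le_of_sum _ (fun t j => P t i j) (fun t => (hP t).1 i)
        (fun j => by rw [hB, Matrix.sum_apply])
    · exact card_le_of_sum _ (fun t i => P t i j) (fun t => (hP t).2 j)
        (fun i => by rw [hB, Matrix.sum_apply])
end

section
/- Let d : ℕ → ℕ satisfy d(1) = 0 and, for every n ≥ 2, d(n) ≤ d(⌈n/2⌉) + 2·⌈n/2⌉. Then for every n ≥ 1, d(n) ≤ 2n + 2·⌈log₂ n⌉. -/
theorem stmt1 (d : ℕ → ℕ) (h1 : d 1 = 0)
    (hrec : ∀ n, 2 ≤ n → d n ≤ d ((n + 1) / 2) + 2 * ((n + 1) / 2)) :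
    ∀ n, 1 ≤ n → d n ≤ 2 * n + 2 * Nat.clog 2 n := by
  intro n
  induction n using Nat.strong_induction_on with
  | _ n ih =>
    intro hn
    by_cases h2 : 2 ≤ n
    · have hr := hrec n h2
      have hi := ih ((n + 1) / 2) (by omega) (by omega)
      have hc := Nat.clog_of_two_le (b := 2) (by norm_num) h2
      have e : n + 2 - 1 = n + 1 := by omega
      rw [e] at hc
      omega
    · have e : n = 1 := by omega
      subst e
      omega
end

section
/- Let d : ℕ → ℕ satisfy d(1) = 0 and, for every n ≥ 2, d(n) ≤ d(⌈n/2⌉) + 8·⌈⌈n/2⌉/6⌉. Then for every n ≥ 1, d(n) ≤ (4/3)·n + 8·⌈log₂ n⌉, where the inequality is understood in the rational numbers. -/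
theorem stmt2 (d : ℕ → ℕ) (h1 : d 1 = 0)
    (hrec : ∀ n, 2 ≤ n → d n ≤ d ((n + 1) / 2) + 8 * (((n + 1) / 2 + 5) / 6)) :
    ∀ n, 1 ≤ n → (d n : ℚ) ≤ 4 / 3 * n + 8 * Nat.clog 2 n := by
  have key : ∀ n, 1 ≤ n → 3 * d n ≤ 4 * n + 24 * Nat.clog 2 n := by
    intro n
    induction n using Nat.strong_induction_on with
    | _ n ih =>
      intro hn
      rcases Nat.lt_or_ge n 2 with h | h
      · have : n = 1 := by omega
        subst this
        omega
      · have hr := hrec n h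
        have hi := ih ((n + 1) / 2) (by omega) (by omega)
        have hc : Nat.clog 2 n = Nat.clog 2 ((n + 1) / 2) + 1 :=
          Nat.clog_of_two_le (by norm_num) h
        omega
  intro n hn
  have h : (3 * d n : ℚ) ≤ 4 * n + 24 * Nat.clog 2 n := by exact_mod_cast key n hn
  linarith
end

section
/- Let A and B be n×n matrices over F₂ with A invertible. Then there exists a partial permutation matrix P of size n×n such that B + P·A is invertible. -/
theorem exists_diag_det_ne_zero : ∀ {n : ℕ} (C : Matrix (Fin n) (Fin n) (ZMod 2)),
    ∃ d : Fin n → ZMod 2, (C + Matrix.diagonal d).det ≠ 0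
  | 0, C => ⟨0, by simp⟩
  | n + 1, C => by
    obtain ⟨d, hd⟩ := exists_diag_det_ne_zero (C.submatrix Fin.succ Fin.succ)
    have hs : ∀ (e : ZMod 2) (f : Fin n → Fin (n + 1)),
        (C + Matrix.diagonal (Fin.cons e d : Fin (n + 1) → ZMod 2)).submatrix Fin.succ f
        = (C + Matrix.diagonal (Fin.cons 0 d : Fin (n + 1) → ZMod 2)).submatrix Fin.succ f := by
      intro e f
      ext i j
      simp [Matrix.diagonal_apply]
    have hm : (C + Matrix.diagonal (Fin.cons 0 d : Fin (n + 1) → ZMod 2)).submatrix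
        Fin.succ Fin.succ = C.submatrix Fin.succ Fin.succ + Matrix.diagonal d := by
      ext i j
      simp [Matrix.diagonal_apply]
    have key : (C + Matrix.diagonal (Fin.cons 1 d : Fin (n + 1) → ZMod 2)).det
        = (C + Matrix.diagonal (Fin.cons 0 d : Fin (n + 1) → ZMod 2)).det
          + (C.submatrix Fin.succ Fin.succ + Matrix.diagonal d).det := by
      rw [Matrix.det_succ_row_zero, Matrix.det_succ_row_zero, Fin.sum_univ_succ,
        Fin.sum_univ_succ]
      simp only [hs 1, ← hm, Fin.succAbove_zero]
      simp [Matrix.diagonal_apply, (Fin.succ_ne_zero _).symm]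
      ring
    by_cases h0 : (C + Matrix.diagonal (Fin.cons 0 d : Fin (n + 1) → ZMod 2)).det = 0
    · exact ⟨Fin.cons 1 d, by rw [key, h0, zero_add]; exact hd⟩
    · exact ⟨_, h0⟩

theorem stmt8 {n : ℕ} (A B : Matrix (Fin n) (Fin n) (ZMod 2)) (hA : IsUnit A) :
    ∃ P : Matrix (Fin n) (Fin n) (ZMod 2),
      IsPartialPermMatrix P ∧ IsUnit (B + P * A) := by
  obtain ⟨d, hd⟩ := exists_diag_det_ne_zero (B * A⁻¹)
  refine ⟨Matrix.diagonal d, ⟨fun i => ?_, fun j => ?_⟩, ?_⟩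
  · rw [Finset.card_le_one]
    intro a ha b hb
    simp only [Finset.mem_filter, Matrix.diagonal_apply] at ha hb
    grind
  · rw [Finset.card_le_one]
    intro a ha b hb
    simp only [Finset.mem_filter, Matrix.diagonal_apply] at ha hb
    grind
  · have hdet : IsUnit A.det := (Matrix.isUnit_iff_isUnit_det A).1 hA
    have h : B + Matrix.diagonal d * A = (B * A⁻¹ + Matrix.diagonal d) * A := by
      rw [add_mul, Matrix.nonsing_inv_mul_cancel_right _ _ hdet]
    rw [h]
    exact ((Matrix.isUnit_iff_isUnit_det _).2 (isUnit_iff_ne_zero.2 hd)).mul hA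
end
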